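/- Let V be a uniformly bounded irreducible weight W_n ⊗ B-module with support contained in α + ℤ^n and all weight spaces of dimension at most N. For 0 ≠ r ∈ ℤ^n let I_{(1,r)} = { b ∈ B : (D(e_1,r) ⊗ b)·V_α = 0 }. Then each I_{(1,r)} is an ideal of B with dim(B/I_{(1,r)}) ≤ N², and I_{(1,e_1)} I_{(1,e_2)}^j ⊆ I_{(1, e_1 + j e_2)} for all j ≥ 1; moreover I_{(1,e_1)} I_{(1,e_2)}^{N²} ⊆ I_{(1, e_1 + j e_2)} for all j ≥ 1. -/

import Mathlib

open scoped TensorProduct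

noncomputable section

namespace LoopWitt

/-- The standard pairing `(u | m)` between `ℂⁿ` and `ℤⁿ`. -/
def pairC {n : ℕ} (u : Fin n → ℂ) (m : Fin n → ℤ) : ℂ := ∑ i, u i * (m i : ℂ)

/-- The standard pairing on `ℂⁿ`. -/
def pairCC {n : ℕ} (u lam : Fin n → ℂ) : ℂ := ∑ i, u i * lam i

/-- `ℤⁿ = K ⊕ ℤβ`. -/
def IsDirectSumDecomp {n : ℕ} (K : AddSubgroup (Fin n → ℤ)) (β : Fin n → ℤ) : Prop :=
  (∀ m : Fin n → ℤ, ∃ a ∈ K, ∃ d : ℤ, m = a + d • β) ∧ ∀ d : ℤ, d • β ∈ K → d = 0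

/-- `r` lies in the positive part `K + ℕ₊ β` of `ℤⁿ`. -/
def posDeg {n : ℕ} (K : AddSubgroup (Fin n → ℤ)) (β : Fin n → ℤ) (r : Fin n → ℤ) : Prop :=
  ∃ a ∈ K, ∃ d : ℤ, 1 ≤ d ∧ r = a + d • β

/-- A representation of the loop Witt algebra `Wₙ ⊗ B`, given by operators
`D u r b` (for `D(u,r) ⊗ b`, where `D(u,r) = Σ uᵢ tʳ dᵢ`), bilinear in `u` and `b`,
subject to the Witt bracket relations. -/
structure WittRep (n : ℕ) (B : Type*) [CommRing B] [Algebra ℂ B]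
    (V : Type*) [AddCommGroup V] [Module ℂ V] where
  D : (Fin n → ℂ) → (Fin n → ℤ) → B → Module.End ℂ V
  D_add_u : ∀ u u' r b, D (u + u') r b = D u r b + D u' r b
  D_smul_u : ∀ (c : ℂ) u r b, D (c • u) r b = c • D u r b
  D_add_b : ∀ u r b b', D u r (b + b') = D u r b + D u r b'
  D_smul_b : ∀ (c : ℂ) u r b, D u r (c • b) = c • D u r b
  comm_DD : ∀ u r b v s b',
    ⁅D u r b, D v s b'⁆ = D (pairC u s • v - pairC v r • u) (r + s) (b * b')

namespace WittRep

variable {n : ℕ} {B : Type*} [CommRing B] [Algebra ℂ B]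
  {V : Type*} [AddCommGroup V] [Module ℂ V]

/-- The weight space of weight `lam` with respect to the Cartan subalgebra `H = ⊕ ℂ dᵢ`. -/
def weightSpace (ρ : WittRep n B V) (lam : Fin n → ℂ) : Submodule ℂ V where
  carrier := {x | ∀ u, ρ.D u 0 1 x = pairCC u lam • x}
  add_mem' := by
    intro a b ha hb u
    rw [map_add, ha u, hb u, smul_add]
  zero_mem' := by intro u; simp
  smul_mem' := by
    intro c a ha u
    rw [map_smul, ha u, smul_comm]

/-- A weight module: the sum of the weight spaces is everything. -/
def IsWeightModule (ρ : WittRep n B V) : Prop :=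
  (⨆ lam : Fin n → ℂ, ρ.weightSpace lam) = ⊤

/-- Uniformly bounded weight spaces. -/
def UniformlyBounded (ρ : WittRep n B V) : Prop :=
  ∃ N : ℕ, ∀ lam, Module.rank ℂ ↥(ρ.weightSpace lam) ≤ (N : Cardinal)

/-- A Harish-Chandra module: a weight module with finite dimensional weight spaces. -/
def HarishChandra (ρ : WittRep n B V) : Prop :=
  ρ.IsWeightModule ∧ ∀ lam, FiniteDimensional ℂ ↥(ρ.weightSpace lam)

/-- A submodule invariant under all the operators. -/
def Invariant (ρ : WittRep n B V) (U : Submodule ℂ V) : Prop :=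
  ∀ u r b, ∀ x ∈ U, ρ.D u r b x ∈ U

/-- Irreducibility. -/
def IsIrreducible (ρ : WittRep n B V) : Prop :=
  (∃ x : V, x ≠ 0) ∧ ∀ U : Submodule ℂ V, ρ.Invariant U → U = ⊥ ∨ U = ⊤

/-- A single point evaluation module. -/
def IsSinglePointEval (ρ : WittRep n B V) : Prop :=
  ∃ η : B →ₐ[ℂ] ℂ, ∀ u r b, ρ.D u r b = η b • ρ.D u r 1

/-- Nontriviality of the action. -/
def IsNontrivial (ρ : WittRep n B V) : Prop := ∃ u r b x, ρ.D u r b x ≠ 0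

/-- `z` is a highest weight vector generating the module, with respect to the
triangular decomposition determined by `ℤⁿ = K ⊕ ℤβ`. -/
def IsHWVector (ρ : WittRep n B V) (K : AddSubgroup (Fin n → ℤ)) (β : Fin n → ℤ)
    (z : V) : Prop :=
  z ≠ 0 ∧ (∃ lam, z ∈ ρ.weightSpace lam) ∧
  (∀ u r b, posDeg K β r → ρ.D u r b z = 0) ∧
  ∀ U : Submodule ℂ V, ρ.Invariant U → z ∈ U → U = ⊤

/-- A highest weight module. -/
def IsHighestWeight (ρ : WittRep n B V) : Prop :=
  ∃ (K : AddSubgroup (Fin n → ℤ)) (β : Fin n → ℤ),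
    IsDirectSumDecomp K β ∧ ∃ z, ρ.IsHWVector K β z

end WittRep

/-- A representation of the loop extended Witt algebra `𝔏_{S,n}(B) = (Wₙ ⋉ (S ⊗ Aₙ)) ⊗ B`,
given by operators `D u r b` (for `D(u,r) ⊗ b`) and `E s m b` (for `s ⊗ tᵐ ⊗ b`),
suitably multilinear, subject to the bracket relations of `𝔏_{S,n}(B)`. -/
structure ExtWittRep (n : ℕ) (S : Type*) [AddCommGroup S] [Module ℂ S]
    (B : Type*) [CommRing B] [Algebra ℂ B]
    (V : Type*) [AddCommGroup V] [Module ℂ V] where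
  D : (Fin n → ℂ) → (Fin n → ℤ) → B → Module.End ℂ V
  E : S → (Fin n → ℤ) → B → Module.End ℂ V
  D_add_u : ∀ u u' r b, D (u + u') r b = D u r b + D u' r b
  D_smul_u : ∀ (c : ℂ) u r b, D (c • u) r b = c • D u r b
  D_add_b : ∀ u r b b', D u r (b + b') = D u r b + D u r b'
  D_smul_b : ∀ (c : ℂ) u r b, D u r (c • b) = c • D u r b
  E_add_s : ∀ s s' m b, E (s + s') m b = E s m b + E s' m b
  E_smul_s : ∀ (c : ℂ) s m b, E (c • s) m b = c • E s m b
  E_add_b : ∀ s m b b', E s m (b + b') = E s m b + E s m b'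
  E_smul_b : ∀ (c : ℂ) s m b, E s m (c • b) = c • E s m b
  comm_DD : ∀ u r b v s b',
    ⁅D u r b, D v s b'⁆ = D (pairC u s • v - pairC v r • u) (r + s) (b * b')
  comm_DE : ∀ u r b s m b', ⁅D u r b, E s m b'⁆ = pairC u m • E s (m + r) (b * b')
  comm_EE : ∀ s m b s' m' b', ⁅E s m b, E s' m' b'⁆ = 0

namespace ExtWittRep

variable {n : ℕ} {S : Type*} [AddCommGroup S] [Module ℂ S]
  {B : Type*} [CommRing B] [Algebra ℂ B]
  {V : Type*} [AddCommGroup V] [Module ℂ V]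

/-- The weight space of the weight given by `lam` on `H` and the linear functional `c`
on `S ≅ S ⊗ t⁰ (⊗ 1)`, with respect to the Cartan subalgebra `H ⊕ (S ⊗ t⁰) (⊗ 1)`. -/
def weightSpace (ρ : ExtWittRep n S B V) (lam : Fin n → ℂ) (c : S →ₗ[ℂ] ℂ) :
    Submodule ℂ V where
  carrier := {x | (∀ u, ρ.D u 0 1 x = pairCC u lam • x) ∧ ∀ s, ρ.E s 0 1 x = c s • x}
  add_mem' := by
    intro a b ha hb
    refine ⟨fun u => ?_, fun s => ?_⟩
    · rw [map_add, ha.1 u, hb.1 u, smul_add]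
    · rw [map_add, ha.2 s, hb.2 s, smul_add]
  zero_mem' := by exact ⟨fun u => by simp, fun s => by simp⟩
  smul_mem' := by
    intro t a ha
    refine ⟨fun u => ?_, fun s => ?_⟩
    · rw [map_smul, ha.1 u, smul_comm]
    · rw [map_smul, ha.2 s, smul_comm]

/-- A weight module: the weight spaces span. -/
def IsWeightModule (ρ : ExtWittRep n S B V) : Prop :=
  (⨆ p : (Fin n → ℂ) × (S →ₗ[ℂ] ℂ), ρ.weightSpace p.1 p.2) = ⊤

/-- Uniformly bounded weight spaces. -/
def UniformlyBounded (ρ : ExtWittRep n S B V) : Prop :=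
  ∃ N : ℕ, ∀ lam c, Module.rank ℂ ↥(ρ.weightSpace lam c) ≤ (N : Cardinal)

/-- Harish-Chandra: a weight module with finite dimensional weight spaces. -/
def HarishChandra (ρ : ExtWittRep n S B V) : Prop :=
  ρ.IsWeightModule ∧ ∀ lam c, FiniteDimensional ℂ ↥(ρ.weightSpace lam c)

/-- Invariant submodule. -/
def Invariant (ρ : ExtWittRep n S B V) (U : Submodule ℂ V) : Prop :=
  (∀ u r b, ∀ x ∈ U, ρ.D u r b x ∈ U) ∧ (∀ s m b, ∀ x ∈ U, ρ.E s m b x ∈ U)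

/-- Irreducibility. -/
def IsIrreducible (ρ : ExtWittRep n S B V) : Prop :=
  (∃ x : V, x ≠ 0) ∧ ∀ U : Submodule ℂ V, ρ.Invariant U → U = ⊥ ∨ U = ⊤

/-- A single point evaluation module. -/
def IsSinglePointEval (ρ : ExtWittRep n S B V) : Prop :=
  ∃ η : B →ₐ[ℂ] ℂ, (∀ u r b, ρ.D u r b = η b • ρ.D u r 1) ∧
    ∀ s m b, ρ.E s m b = η b • ρ.E s m 1

/-- Single point generalised evaluation module: the action factors through
`𝔤 ⊗ B/𝔪ᵏ` for some maximal ideal `𝔪` and some `k`. -/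
def IsGenEval (ρ : ExtWittRep n S B V) : Prop :=
  ∃ 𝔪 : Ideal B, 𝔪.IsMaximal ∧ ∃ k : ℕ, ∀ b ∈ 𝔪 ^ k,
    (∀ u r, ρ.D u r b = 0) ∧ ∀ s m, ρ.E s m b = 0

/-- Nontriviality of the action. -/
def IsNontrivial (ρ : ExtWittRep n S B V) : Prop :=
  (∃ u r b x, ρ.D u r b x ≠ 0) ∨ ∃ s m b x, ρ.E s m b x ≠ 0

/-- The submodule of vectors on which the whole Lie algebra acts trivially. -/
def trivVectors (ρ : ExtWittRep n S B V) : Submodule ℂ V where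
  carrier := {x | (∀ u r b, ρ.D u r b x = 0) ∧ ∀ s m b, ρ.E s m b x = 0}
  add_mem' := by
    intro a b ha hb
    exact ⟨fun u r c => by rw [map_add, ha.1 u r c, hb.1 u r c, add_zero],
      fun s m c => by rw [map_add, ha.2 s m c, hb.2 s m c, add_zero]⟩
  zero_mem' := ⟨fun u r c => by simp, fun s m c => by simp⟩
  smul_mem' := by
    intro t a ha
    exact ⟨fun u r c => by rw [map_smul, ha.1 u r c, smul_zero],
      fun s m c => by rw [map_smul, ha.2 s m c, smul_zero]⟩

/-- Highest weight vector for the triangular decomposition determined by `ℤⁿ = K ⊕ ℤβ`,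
generating the whole module. -/
def IsHWVector (ρ : ExtWittRep n S B V) (K : AddSubgroup (Fin n → ℤ)) (β : Fin n → ℤ)
    (z : V) : Prop :=
  z ≠ 0 ∧ (∃ lam c, z ∈ ρ.weightSpace lam c) ∧
  (∀ u r b, posDeg K β r → ρ.D u r b z = 0) ∧
  (∀ s m b, posDeg K β m → ρ.E s m b z = 0) ∧
  ∀ U : Submodule ℂ V, ρ.Invariant U → z ∈ U → U = ⊤

/-- Highest weight module. -/
def IsHighestWeight (ρ : ExtWittRep n S B V) : Prop :=
  ∃ (K : AddSubgroup (Fin n → ℤ)) (β : Fin n → ℤ),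
    IsDirectSumDecomp K β ∧ ∃ z, ρ.IsHWVector K β z

/-- Invariance under the degree-`K` part `(𝔏_{S,n}(B))_K`. -/
def InvariantK (ρ : ExtWittRep n S B V) (K : AddSubgroup (Fin n → ℤ))
    (U : Submodule ℂ V) : Prop :=
  (∀ u, ∀ r ∈ K, ∀ b, ∀ x ∈ U, ρ.D u r b x ∈ U) ∧
    ∀ s, ∀ m ∈ K, ∀ b, ∀ x ∈ U, ρ.E s m b x ∈ U

/-- The highest weight space: the `(𝔏_{S,n}(B))_K`-submodule generated by `z`. -/
def hwSpace (ρ : ExtWittRep n S B V) (K : AddSubgroup (Fin n → ℤ)) (z : V) :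
    Submodule ℂ V :=
  sInf {U : Submodule ℂ V | z ∈ U ∧ ρ.InvariantK K U}

end ExtWittRep

end LoopWitt

open LoopWitt

/-!
For `r ≠ 0`, bracketing `D(v,r) ⊗ b` with `D(u,0) ⊗ c`, where `(u|r) ≠ 0`, gives a nonzero multiple
of `D(v,r) ⊗ cb` and preserves `V_α`; so the `b` that kill `V_α` form an ideal `I_{(v,r)}`, and
`B/I_{(v,r)}` embeds into `Hom(V_α, V_{α+r})`. If `(u|s) = (v|s) = 0` and `(v|r) ≠ 0`, then
`[D(v,s) ⊗ b, D(u,r) ⊗ a] = (v|r) D(u,r+s) ⊗ ab`, whence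
`I_{(u,r)} I_{(v,s)}^j ⊆ I_{(u,r+js)}`. Finally, in an algebra of dimension at most `N²` the powers
of an ideal are stationary from the exponent `N²` on, so that modulo `I_{(u,r+js)}` the exponent `j`
may be replaced by `N²`.
-/

namespace LoopWitt

section IdealPowers

variable (k : Type*) [Field k]

theorem ideal_pow_finrank_le_pow {Q : Type*} [CommRing Q] [Algebra k Q] [FiniteDimensional k Q]
    (K : Ideal Q) (j : ℕ) : K ^ Module.finrank k Q ≤ K ^ j := by
  let codim (I : Ideal Q) : ℕ := Module.finrank k (Q ⧸ I.restrictScalars k)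
  have codim_add (I : Ideal Q) :
      codim I + Module.finrank k (I.restrictScalars k) = Module.finrank k Q :=
    Submodule.finrank_quotient_add_finrank _
  have codim_anti {I J : Ideal Q} (hIJ : I ≤ J) : codim J ≤ codim I := by
    have : Module.finrank k (I.restrictScalars k) ≤ Module.finrank k (J.restrictScalars k) :=
      Submodule.finrank_mono hIJ
    have := codim_add I
    have := codim_add J
    omega
  have eq_of_codim_eq {I J : Ideal Q} (hIJ : I ≤ J) (h : codim J = codim I) : I = J := by
    refine Submodule.restrictScalars_injective k Q Q (Submodule.eq_of_le_of_finrank_eq hIJ ?_)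
    have := codim_add I
    have := codim_add J
    omega
  have codim_stable (m : ℕ) (h : codim (K ^ m) = codim (K ^ (m + 1))) :
      codim (K ^ (m + 1)) = codim (K ^ (m + 2)) := by
    have pow_eq : K ^ (m + 1) = K ^ m := eq_of_codim_eq (Ideal.pow_le_pow_right m.le_succ) h
    rw [pow_succ K (m + 1), pow_eq, ← pow_succ, pow_eq]
  rcases le_total j (Module.finrank k Q) with hj | hj
  · exact Ideal.pow_le_pow_right hj
  · have codim_eq : codim (K ^ j) = codim (K ^ Module.finrank k Q) :=
      Nat.stabilises_of_monotone (f := fun m => codim (K ^ m))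
        (fun _ _ hlm => codim_anti (Ideal.pow_le_pow_right hlm))
        (fun _ => Submodule.finrank_quotient_le _) codim_stable hj
    exact (eq_of_codim_eq (Ideal.pow_le_pow_right hj) codim_eq.symm).ge

theorem ideal_pow_le_pow_sup_of_rank_quotient_le {B : Type*} [CommRing B] [Algebra k B]
    (K J : Ideal B) {d : ℕ} (hJ : Module.rank k (B ⧸ J) ≤ d) (j : ℕ) :
    K ^ d ≤ K ^ j ⊔ J := by
  have : FiniteDimensional k (B ⧸ J) :=
    Module.rank_lt_aleph0_iff.mp (hJ.trans_lt Cardinal.natCast_lt_aleph0)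
  have map_pow_le : (K.map (Ideal.Quotient.mk J)) ^ d ≤ (K.map (Ideal.Quotient.mk J)) ^ j :=
    (Ideal.pow_le_pow_right (Module.finrank_le_of_rank_le hJ)).trans
      (ideal_pow_finrank_le_pow k _ j)
  rwa [← Ideal.map_pow, ← Ideal.map_pow, Ideal.map_le_iff_le_comap, Ideal.comap_map_quotientMk,
    sup_comm] at map_pow_le

end IdealPowers

section Pairing

variable {n : ℕ}

@[simp]
theorem pairC_zero (u : Fin n → ℂ) : pairC u 0 = 0 := by simp [pairC]

theorem pairC_add (u : Fin n → ℂ) (r s : Fin n → ℤ) :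
    pairC u (r + s) = pairC u r + pairC u s := by
  simp [pairC, mul_add, Finset.sum_add_distrib]

theorem pairC_nsmul (u : Fin n → ℂ) (j : ℕ) (s : Fin n → ℤ) :
    pairC u (j • s) = j * pairC u s := by
  simp [pairC, Finset.mul_sum, mul_left_comm]

theorem pairC_add_nsmul_of_pairC_eq_zero {u : Fin n → ℂ} {s : Fin n → ℤ} (hus : pairC u s = 0)
    (r : Fin n → ℤ) (j : ℕ) : pairC u (r + j • s) = pairC u r := by
  rw [pairC_add, pairC_nsmul, hus, mul_zero, add_zero]

@[simp]
theorem pairC_single_one (i : Fin n) (m : Fin n → ℤ) : pairC (Pi.single i 1) m = m i := by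
  simp [pairC, Pi.single_apply]

theorem pairCC_add_intCast (u lam : Fin n → ℂ) (r : Fin n → ℤ) :
    pairCC u (fun i => lam i + (r i : ℂ)) = pairCC u lam + pairC u r := by
  simp [pairCC, pairC, mul_add, Finset.sum_add_distrib]

end Pairing

namespace WittRep

variable {n : ℕ} {B : Type*} [CommRing B] [Algebra ℂ B]
  {V : Type*} [AddCommGroup V] [Module ℂ V] (ρ : WittRep n B V)

theorem D_comm_apply (u r b v s b') (x : V) :
    ρ.D u r b (ρ.D v s b' x) - ρ.D v s b' (ρ.D u r b x) =
      ρ.D (pairC u s • v - pairC v r • u) (r + s) (b * b') x := by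
  rw [← ρ.comm_DD, Ring.lie_def]
  rfl

theorem D_comm_apply_of_pairC_eq_zero {v : Fin n → ℂ} {r : Fin n → ℤ} (hvr : pairC v r = 0)
    (u b s b') (x : V) :
    ρ.D u r b (ρ.D v s b' x) - ρ.D v s b' (ρ.D u r b x) =
      pairC u s • ρ.D v (r + s) (b * b') x := by
  rw [D_comm_apply, hvr, zero_smul, sub_zero, ρ.D_smul_u, LinearMap.smul_apply]

theorem D_mem_weightSpace (v r b) {lam : Fin n → ℂ} {x : V} (hx : x ∈ ρ.weightSpace lam) :
    ρ.D v r b x ∈ ρ.weightSpace (fun i => lam i + (r i : ℂ)) := by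
  intro u
  have hcomm := ρ.D_comm_apply_of_pairC_eq_zero (pairC_zero v) u 1 r b x
  rw [hx u, map_smul, zero_add, one_mul, sub_eq_iff_eq_add'] at hcomm
  rw [hcomm, pairCC_add_intCast, add_smul]

/-- The ideal `I_{(v,r)} = { b : (D(v,r) ⊗ b)·V_lam = 0 }`. The defining condition is imposed on all
multiples `c * b` so that this is an ideal for every `r`, including `r = 0`. -/
def annIdeal (lam v : Fin n → ℂ) (r : Fin n → ℤ) : Ideal B where
  carrier := {b | ∀ c, ∀ x ∈ ρ.weightSpace lam, ρ.D v r (c * b) x = 0}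
  add_mem' := by
    intro a b ha hb c x hx
    rw [mul_add, ρ.D_add_b, LinearMap.add_apply, ha c x hx, hb c x hx, add_zero]
  zero_mem' := by
    intro c x _
    rw [mul_zero, ← zero_smul ℂ (0 : B), ρ.D_smul_b, zero_smul, LinearMap.zero_apply]
  smul_mem' := by
    intro a b hb c x hx
    rw [smul_eq_mul, ← mul_assoc]
    exact hb (c * a) x hx

theorem D_apply_eq_zero_of_mem_annIdeal {lam v : Fin n → ℂ} {r : Fin n → ℤ} {b : B}
    (hb : b ∈ ρ.annIdeal lam v r) {x : V} (hx : x ∈ ρ.weightSpace lam) : ρ.D v r b x = 0 := by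
  simpa using hb 1 x hx

theorem mem_annIdeal_iff {lam v : Fin n → ℂ} {r : Fin n → ℤ} (hr : r ≠ 0) {b : B} :
    b ∈ ρ.annIdeal lam v r ↔ ∀ x ∈ ρ.weightSpace lam, ρ.D v r b x = 0 := by
  refine ⟨fun hb x => ρ.D_apply_eq_zero_of_mem_annIdeal hb, fun hb c x hx => ?_⟩
  obtain ⟨i, hi⟩ := Function.ne_iff.mp hr
  have hcx : ρ.D (Pi.single i 1) 0 c x ∈ ρ.weightSpace lam := by
    simpa using ρ.D_mem_weightSpace (Pi.single i 1) 0 c hx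
  have hcomm := ρ.D_comm_apply_of_pairC_eq_zero (pairC_zero v) (Pi.single i 1) c r b x
  rw [hb x hx, hb _ hcx, map_zero, sub_zero, zero_add, pairC_single_one] at hcomm
  exact (smul_eq_zero.mp hcomm.symm).resolve_left (Int.cast_ne_zero.mpr hi)

/-- The linear map `B → Hom(V_lam, V_{lam+r})` sending `b` to the action of `D(v,r) ⊗ b`; it embeds
`B/I_{(v,r)}` into a finite-dimensional space. -/
def actionMap (lam v : Fin n → ℂ) (r : Fin n → ℤ) :
    B →ₗ[ℂ] ρ.weightSpace lam →ₗ[ℂ] ρ.weightSpace (fun i => lam i + (r i : ℂ)) where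
  toFun b := (ρ.D v r b).restrict fun _ hx => ρ.D_mem_weightSpace v r b hx
  map_add' b b' := by ext x; simp [ρ.D_add_b]
  map_smul' c b := by ext x; simp [ρ.D_smul_b]

theorem ker_actionMap {lam v : Fin n → ℂ} {r : Fin n → ℤ} (hr : r ≠ 0) :
    LinearMap.ker (ρ.actionMap lam v r) = (ρ.annIdeal lam v r).restrictScalars ℂ := by
  ext b
  rw [Submodule.restrictScalars_mem, ρ.mem_annIdeal_iff hr, LinearMap.mem_ker, LinearMap.ext_iff]
  simp [actionMap, Subtype.ext_iff]

theorem rank_quotient_annIdeal_le {lam v : Fin n → ℂ} {r : Fin n → ℤ} (hr : r ≠ 0) {M N : ℕ}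
    (hM : Module.rank ℂ (ρ.weightSpace lam) ≤ M)
    (hN : Module.rank ℂ (ρ.weightSpace fun i => lam i + (r i : ℂ)) ≤ N) :
    Module.rank ℂ (B ⧸ ρ.annIdeal lam v r) ≤ (M * N : ℕ) := by
  have : FiniteDimensional ℂ (ρ.weightSpace lam) :=
    Module.rank_lt_aleph0_iff.mp (hM.trans_lt Cardinal.natCast_lt_aleph0)
  let e : (B ⧸ ρ.annIdeal lam v r) ≃ₗ[ℂ] LinearMap.range (ρ.actionMap lam v r) :=
    (Submodule.Quotient.restrictScalarsEquiv ℂ (ρ.annIdeal lam v r)).symm ≪≫ₗ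
      Submodule.quotEquivOfEq _ _ (ρ.ker_actionMap hr).symm ≪≫ₗ
      (ρ.actionMap lam v r).quotKerEquivRange
  rw [← Cardinal.lift_le_nat_iff, e.lift_rank_eq, Cardinal.lift_le_nat_iff, Nat.cast_mul]
  refine (Submodule.rank_le _).trans ?_
  rw [Module.rank_linearMap, Cardinal.lift_id, Cardinal.lift_id]
  exact mul_le_mul' hM hN

theorem annIdeal_mul_le {lam u v : Fin n → ℂ} {r s : Fin n → ℤ} (hus : pairC u s = 0)
    (hvr : pairC v r ≠ 0) :
    ρ.annIdeal lam u r * ρ.annIdeal lam v s ≤ ρ.annIdeal lam u (r + s) := by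
  rw [Ideal.mul_le]
  intro a ha b hb c x hx
  have hcomm := ρ.D_comm_apply_of_pairC_eq_zero hus v b r (c * a) x
  rw [ha c x hx, ρ.D_apply_eq_zero_of_mem_annIdeal hb hx, map_zero, map_zero, sub_zero] at hcomm
  rw [add_comm, ← mul_assoc, mul_comm]
  exact (smul_eq_zero.mp hcomm.symm).resolve_left hvr

theorem annIdeal_mul_pow_le {lam u v : Fin n → ℂ} {r s : Fin n → ℤ} (hus : pairC u s = 0)
    (hvs : pairC v s = 0) (hvr : pairC v r ≠ 0) (j : ℕ) :
    ρ.annIdeal lam u r * ρ.annIdeal lam v s ^ j ≤ ρ.annIdeal lam u (r + j • s) := by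
  induction j with
  | zero => simp
  | succ j ih =>
    rw [pow_succ, ← mul_assoc, succ_nsmul, ← add_assoc]
    exact (Ideal.mul_mono_left ih).trans
      (ρ.annIdeal_mul_le hus (by rwa [pairC_add_nsmul_of_pairC_eq_zero hvs]))

theorem annIdeal_mul_pow_le_of_rank_quotient_le {lam u v : Fin n → ℂ} {r s : Fin n → ℤ}
    (hus : pairC u s = 0) (hvs : pairC v s = 0) (hvr : pairC v r ≠ 0) {d j : ℕ}
    (hd : Module.rank ℂ (B ⧸ ρ.annIdeal lam u (r + j • s)) ≤ d) :
    ρ.annIdeal lam u r * ρ.annIdeal lam v s ^ d ≤ ρ.annIdeal lam u (r + j • s) :=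
  calc ρ.annIdeal lam u r * ρ.annIdeal lam v s ^ d
    _ ≤ ρ.annIdeal lam u r * (ρ.annIdeal lam v s ^ j ⊔ ρ.annIdeal lam u (r + j • s)) :=
      Ideal.mul_mono_right (ideal_pow_le_pow_sup_of_rank_quotient_le ℂ _ _ hd j)
    _ = ρ.annIdeal lam u r * ρ.annIdeal lam v s ^ j ⊔
        ρ.annIdeal lam u r * ρ.annIdeal lam u (r + j • s) := Ideal.mul_sup ..
    _ ≤ ρ.annIdeal lam u (r + j • s) :=
      sup_le (ρ.annIdeal_mul_pow_le hus hvs hvr j) Ideal.mul_le_right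

end WittRep

end LoopWitt

theorem stmt4_general {n : ℕ} {B V : Type*} [CommRing B] [Algebra ℂ B]
    [AddCommGroup V] [Module ℂ V] (ρ : WittRep n B V) (α : Fin n → ℂ) (N : ℕ)
    (hbd : ∀ m : Fin n → ℤ, Module.rank ℂ (ρ.weightSpace fun i => α i + (m i : ℂ)) ≤ N) :
    ∃ I : (Fin n → ℂ) → (Fin n → ℤ) → Ideal B,
      (∀ u r, r ≠ 0 → ∀ b, b ∈ I u r ↔ ∀ x ∈ ρ.weightSpace α, ρ.D u r b x = 0) ∧
      (∀ u r, r ≠ 0 → Module.rank ℂ (B ⧸ I u r) ≤ ((N ^ 2 : ℕ) : Cardinal)) ∧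
      (∀ u v r s, pairC u s = 0 → pairC v s = 0 → pairC v r ≠ 0 →
        ∀ j : ℕ, I u r * I v s ^ j ≤ I u (r + j • s)) ∧
      (∀ u v r s, pairC u s = 0 → pairC v s = 0 → pairC v r ≠ 0 →
        ∀ j : ℕ, I u r * I v s ^ (N ^ 2) ≤ I u (r + j • s)) := by
  have rank_le (u r) (hr : r ≠ 0) :
      Module.rank ℂ (B ⧸ ρ.annIdeal α u r) ≤ ((N ^ 2 : ℕ) : Cardinal) := by
    have add_zero_eq : (fun i => α i + ((0 : Fin n → ℤ) i : ℂ)) = α := by simp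
    exact sq N ▸ ρ.rank_quotient_annIdeal_le hr (add_zero_eq ▸ hbd 0) (hbd r)
  refine ⟨ρ.annIdeal α, fun u r hr b => ρ.mem_annIdeal_iff hr, rank_le,
    fun u v r s hus hvs hvr => ρ.annIdeal_mul_pow_le hus hvs hvr,
    fun u v r s hus hvs hvr j => ?_⟩
  have add_nsmul_ne_zero : r + j • s ≠ 0 := fun h => hvr <| by
    rw [← pairC_add_nsmul_of_pairC_eq_zero hvs r j, h, pairC_zero]
  exact ρ.annIdeal_mul_pow_le_of_rank_quotient_le hus hvs hvr (rank_le u _ add_nsmul_ne_zero)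

/-- The ideals `I_{(1,r)} = { b ∈ B : (D(e₁,r) ⊗ b)·V_α = 0 }` of a
uniformly bounded irreducible weight `Wₙ ⊗ B`-module: each is an ideal of codimension at
most `N²`, and the product inclusions `I_{(1,e₁)} I_{(1,e₂)}ʲ ⊆ I_{(1,e₁+je₂)}` and
`I_{(1,e₁)} I_{(1,e₂)}^{N²} ⊆ I_{(1,e₁+je₂)}` hold for all `j ≥ 1`. -/
theorem stmt4 {n : ℕ} (hn : 2 ≤ n) {B V : Type*}
    [CommRing B] [Algebra ℂ B] [Algebra.FiniteType ℂ B]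
    [AddCommGroup V] [Module ℂ V]
    (ρ : WittRep n B V)
    (hw : ρ.IsWeightModule) (hirr : ρ.IsIrreducible)
    (α : Fin n → ℂ) (N : ℕ)
    (hsupp : ∀ lam, ρ.weightSpace lam ≠ ⊥ → ∃ m : Fin n → ℤ, lam = fun i => α i + (m i : ℂ))
    (hbd : ∀ lam, Module.rank ℂ ↥(ρ.weightSpace lam) ≤ (N : Cardinal)) :
    ∃ I : (Fin n → ℤ) → Ideal B,
      -- `I r` has carrier `I_{(1,r)}` (this says in particular that `I_{(1,r)}` is an ideal)
      (∀ r : Fin n → ℤ, r ≠ 0 →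
        ∀ b : B, b ∈ I r ↔ ∀ x ∈ ρ.weightSpace α,
          ρ.D (Pi.single (⟨0, by omega⟩ : Fin n) (1 : ℂ)) r b x = 0) ∧
      -- `dim (B / I_{(1,r)}) ≤ N²`
      (∀ r : Fin n → ℤ, r ≠ 0 → Module.rank ℂ (B ⧸ I r) ≤ ((N ^ 2 : ℕ) : Cardinal)) ∧
      -- `I_{(1,e₁)} I_{(1,e₂)}ʲ ⊆ I_{(1, e₁ + j e₂)}` for all `j ≥ 1`
      (∀ j : ℕ, 1 ≤ j →
        I (Pi.single (⟨0, by omega⟩ : Fin n) (1 : ℤ)) *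
            I (Pi.single (⟨1, by omega⟩ : Fin n) (1 : ℤ)) ^ j ≤
          I (Pi.single (⟨0, by omega⟩ : Fin n) (1 : ℤ) +
              j • Pi.single (⟨1, by omega⟩ : Fin n) (1 : ℤ))) ∧
      -- `I_{(1,e₁)} I_{(1,e₂)}^{N²} ⊆ I_{(1, e₁ + j e₂)}` for all `j ≥ 1`
      (∀ j : ℕ, 1 ≤ j →
        I (Pi.single (⟨0, by omega⟩ : Fin n) (1 : ℤ)) *
            I (Pi.single (⟨1, by omega⟩ : Fin n) (1 : ℤ)) ^ (N ^ 2) ≤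
          I (Pi.single (⟨0, by omega⟩ : Fin n) (1 : ℤ) +
              j • Pi.single (⟨1, by omega⟩ : Fin n) (1 : ℤ))) := by
  obtain ⟨I, mem_iff, rank_le, mul_pow_le, mul_pow_sq_le⟩ := stmt4_general ρ α N fun _ => hbd _
  exact ⟨I (Pi.single ⟨0, by omega⟩ 1), mem_iff _, rank_le _,
    fun j _ => mul_pow_le _ _ _ _ (by simp) (by simp) (by simp) j,
    fun j _ => mul_pow_sq_le _ _ _ _ (by simp) (by simp) (by simp) j⟩
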